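/- For every prime power q, C_{6,4}(q) = q^18 − 9q^17 + 25q^16 − 16q^15 − 58q^14 − 32q^13 − 10q^12 + 82q^11 + 73q^10 + 41q^9 − 15q^8 − 66q^7 − 16q^6 + 40·A_6(4,q), where A_6(4,q) is the number of strong realizations in P^3(F_q) of the hyperfiguration on 6 points. -/

import Mathlib

open scoped LinearAlgebra.Projectivization

/-- Three points of `ℙ³(F_q)` are collinear if vector representatives of them span a
subspace of `F_q^4` of dimension at most 2. -/
def Collinear3 (F : Type) [Field F] (x y z : ℙ F (Fin 4 → F)) : Prop :=
  Module.finrank F ↥(x.submodule ⊔ y.submodule ⊔ z.submodule) ≤ 2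

/-- Four points of `ℙ³(F_q)` are coplanar if vector representatives of them span a
subspace of `F_q^4` of dimension at most 3. -/
def Coplanar4 (F : Type) [Field F] (x y z w : ℙ F (Fin 4 → F)) : Prop :=
  Module.finrank F ↥(x.submodule ⊔ y.submodule ⊔ z.submodule ⊔ w.submodule) ≤ 3

/-- A strong realization in `ℙ³(F_q)` of the hyperfiguration on 6 points: an injective
`σ : {0,…,5} → ℙ³(F_q)` such that a triple of image points is collinear iff its index set
is contained in `{0,1,2}` or `{3,4,5}`, and four image points are coplanar iff their index
set is one of the six listed planes. `A_6(4,q)` is the number of such maps. -/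
def IsHyp6Real (F : Type) [Field F] (σ : Fin 6 → ℙ F (Fin 4 → F)) : Prop :=
  Function.Injective σ ∧
    (∀ a b c : Fin 6, a ≠ b → a ≠ c → b ≠ c →
      (Collinear3 F (σ a) (σ b) (σ c) ↔
        ({a, b, c} : Finset (Fin 6)) ⊆ {0, 1, 2} ∨
          ({a, b, c} : Finset (Fin 6)) ⊆ {3, 4, 5})) ∧
    (∀ a b c d : Fin 6, a ≠ b → a ≠ c → a ≠ d → b ≠ c → b ≠ d → c ≠ d →
      (Coplanar4 F (σ a) (σ b) (σ c) (σ d) ↔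
        ({a, b, c, d} : Finset (Fin 6)) ∈
          ({{0, 1, 2, 3}, {0, 1, 2, 4}, {0, 1, 2, 5}, {0, 3, 4, 5}, {1, 3, 4, 5},
            {2, 3, 4, 5}} : Finset (Finset (Fin 6)))))

/-- An ordered `n`-arc in `ℙ³(F_q)`. -/
def IsArc4 (F : Type) [Field F] {n : ℕ} (σ : Fin n → ℙ F (Fin 4 → F)) : Prop :=
  Function.Injective σ ∧
    ∀ a b c d : Fin n, a ≠ b → a ≠ c → a ≠ d → b ≠ c → b ≠ d → c ≠ d →
      ¬ Coplanar4 F (σ a) (σ b) (σ c) (σ d)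

section helpers

open scoped Matrix

variable {F : Type} [Field F]

lemma not_indepOn_iff (w : Fin 6 → (Fin 4 → F)) (s : Finset (Fin 6)) :
    Module.finrank F (Submodule.span F (w '' (s : Set (Fin 6)))) < s.card ↔
      ¬ LinearIndepOn F w (s : Set (Fin 6)) := by
  rw [LinearIndepOn, linearIndependent_iff_card_le_finrank_span, not_le]
  have : Set.range (fun x : (s : Set (Fin 6)) => w x) = w '' (s : Set (Fin 6)) := by
    rw [Set.image_eq_range]
  rw [this, Set.finrank]
  simp

lemma collinear3_iff (w : Fin 6 → (Fin 4 → F)) (h : ∀ i, w i ≠ 0) (a b c : Fin 6)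
    (hab : a ≠ b) (hac : a ≠ c) (hbc : b ≠ c) :
    Collinear3 F (Projectivization.mk F (w a) (h a)) (Projectivization.mk F (w b) (h b))
      (Projectivization.mk F (w c) (h c)) ↔
      ¬ LinearIndepOn F w (({a, b, c} : Finset (Fin 6)) : Set (Fin 6)) := by
  rw [← not_indepOn_iff, Finset.card_eq_three.2 ⟨a, b, c, hab, hac, hbc, rfl⟩, Collinear3,
    Projectivization.submodule_mk, Projectivization.submodule_mk, Projectivization.submodule_mk,
    ← Submodule.span_union, ← Submodule.span_union, Nat.lt_succ_iff]
  have : ({w a} ∪ {w b} ∪ {w c} : Set (Fin 4 → F)) =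
      w '' (({a, b, c} : Finset (Fin 6)) : Set (Fin 6)) := by
    ext x; simp [eq_comm]; try tauto
  rw [this]

lemma coplanar4_iff (w : Fin 6 → (Fin 4 → F)) (h : ∀ i, w i ≠ 0) (a b c d : Fin 6)
    (hab : a ≠ b) (hac : a ≠ c) (had : a ≠ d) (hbc : b ≠ c) (hbd : b ≠ d) (hcd : c ≠ d) :
    Coplanar4 F (Projectivization.mk F (w a) (h a)) (Projectivization.mk F (w b) (h b))
      (Projectivization.mk F (w c) (h c)) (Projectivization.mk F (w d) (h d)) ↔
      ¬ LinearIndepOn F w (({a, b, c, d} : Finset (Fin 6)) : Set (Fin 6)) := by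
  have hc : ({a, b, c, d} : Finset (Fin 6)).card = 3 + 1 := by
    simp [*]
  rw [← not_indepOn_iff, hc, Coplanar4,
    Projectivization.submodule_mk, Projectivization.submodule_mk, Projectivization.submodule_mk,
    Projectivization.submodule_mk,
    ← Submodule.span_union, ← Submodule.span_union, ← Submodule.span_union, Nat.lt_succ_iff]
  have : ({w a} ∪ {w b} ∪ {w c} ∪ {w d} : Set (Fin 4 → F)) =
      w '' (({a, b, c, d} : Finset (Fin 6)) : Set (Fin 6)) := by
    ext x; simp [eq_comm]; try tauto
  rw [this]

lemma indepOn_det (w : Fin 6 → (Fin 4 → F)) (a b c d : Fin 6)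
    (hab : a ≠ b ∧ a ≠ c ∧ a ≠ d ∧ b ≠ c ∧ b ≠ d ∧ c ≠ d) :
    LinearIndepOn F w (({a, b, c, d} : Finset (Fin 6)) : Set (Fin 6)) ↔
      (Matrix.of ![w a, w b, w c, w d]).det ≠ 0 := by
  obtain ⟨hab, hac, had, hbc, hbd, hcd⟩ := hab
  have hc : ({a, b, c, d} : Finset (Fin 6)).card = 4 := by
    simp [*]
  rw [← not_iff_not, ← not_indepOn_iff, ← isUnit_iff_ne_zero, ← Matrix.isUnit_iff_isUnit_det,
    ← Matrix.linearIndependent_rows_iff_isUnit, linearIndependent_iff_card_le_finrank_span, hc,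
    not_le, Set.finrank]
  have : Set.range (Matrix.of ![w a, w b, w c, w d]).row =
      w '' (({a, b, c, d} : Finset (Fin 6)) : Set (Fin 6)) := by
    have h1 : (Matrix.of ![w a, w b, w c, w d]).row = ![w a, w b, w c, w d] := rfl
    rw [h1]
    ext x; simp [eq_comm]; tauto
  rw [this]; simp

/-- The arc condition on vectors. -/
def ArcV (w : Fin 6 → (Fin 4 → F)) : Prop :=
  ∀ s : Finset (Fin 6), s.card = 4 → LinearIndepOn F w (s : Set (Fin 6))

/-- The hyperfiguration condition on vectors. -/
def HypV (w : Fin 6 → (Fin 4 → F)) : Prop :=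
  (∀ s : Finset (Fin 6), s.card = 4 → ¬ ({0, 1, 2} ⊆ s) → ¬ ({3, 4, 5} ⊆ s) →
    LinearIndepOn F w (s : Set (Fin 6))) ∧
  ¬ LinearIndepOn F w (({0, 1, 2} : Finset (Fin 6)) : Set (Fin 6)) ∧
  ¬ LinearIndepOn F w (({3, 4, 5} : Finset (Fin 6)) : Set (Fin 6))

lemma mk_ne_of_indepOn (w : Fin 6 → (Fin 4 → F)) (h : ∀ i, w i ≠ 0) (a b : Fin 6) (hab : a ≠ b)
    (s : Finset (Fin 6)) (ha : a ∈ s) (hb : b ∈ s) (hs : LinearIndepOn F w (s : Set (Fin 6))) :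
    Projectivization.mk F (w a) (h a) ≠ Projectivization.mk F (w b) (h b) := by
  intro he
  rw [Projectivization.mk_eq_mk_iff'] at he
  obtain ⟨t, ht⟩ := he
  have h2 : LinearIndepOn F w ({a, b} : Set (Fin 6)) :=
    hs.mono (by intro x hx; rcases hx with rfl | rfl <;> assumption)
  rw [LinearIndepOn.pair_iff _ hab] at h2
  have := h2 1 (-t) (by rw [← ht]; simp)
  simp at this

lemma isArc4_iff (w : Fin 6 → (Fin 4 → F)) (h : ∀ i, w i ≠ 0) :
    IsArc4 F (fun i => Projectivization.mk F (w i) (h i)) ↔ ArcV w := by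
  constructor
  · rintro ⟨-, h2⟩ s hs
    obtain ⟨a, b, c, d, hab, hac, had, hbc, hbd, hcd, rfl⟩ := Finset.card_eq_four.1 hs
    have := h2 a b c d hab hac had hbc hbd hcd
    rwa [coplanar4_iff w h a b c d hab hac had hbc hbd hcd, not_not] at this
  · intro hA
    refine ⟨?_, ?_⟩
    · intro a b he
      by_contra hab
      have : ∀ a b : Fin 6, ∃ s : Finset (Fin 6), s.card = 4 ∧ a ∈ s ∧ b ∈ s := by decide
      obtain ⟨s, hs, ha, hb⟩ := this a b
      exact mk_ne_of_indepOn w h a b hab s ha hb (hA s hs) he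
    · intro a b c d hab hac had hbc hbd hcd
      rw [coplanar4_iff w h a b c d hab hac had hbc hbd hcd, not_not]
      exact hA _ (by simp [*])

set_option maxRecDepth 100000 in
lemma isHyp_iff (w : Fin 6 → (Fin 4 → F)) (h : ∀ i, w i ≠ 0) :
    IsHyp6Real F (fun i => Projectivization.mk F (w i) (h i)) ↔ HypV w := by
  have key : ∀ s : Finset (Fin 6), s.card = 4 → (s ∈
          ({{0, 1, 2, 3}, {0, 1, 2, 4}, {0, 1, 2, 5}, {0, 3, 4, 5}, {1, 3, 4, 5},
            {2, 3, 4, 5}} : Finset (Finset (Fin 6))) ↔ ({0, 1, 2} ⊆ s ∨ {3, 4, 5} ⊆ s)) := by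
    decide
  constructor
  · rintro ⟨-, h2, h3⟩
    refine ⟨?_, ?_, ?_⟩
    · intro s hs h012 h345
      have hk := key s hs
      obtain ⟨a, b, c, d, hab, hac, had, hbc, hbd, hcd, rfl⟩ := Finset.card_eq_four.1 hs
      have := h3 a b c d hab hac had hbc hbd hcd
      rw [coplanar4_iff w h a b c d hab hac had hbc hbd hcd, hk] at this
      tauto
    · rw [← collinear3_iff w h 0 1 2 (by decide) (by decide) (by decide)]
      exact (h2 0 1 2 (by decide) (by decide) (by decide)).2 (by decide)
    · rw [← collinear3_iff w h 3 4 5 (by decide) (by decide) (by decide)]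
      exact (h2 3 4 5 (by decide) (by decide) (by decide)).2 (by decide)
  · rintro ⟨h1, h2, h3⟩
    refine ⟨?_, ?_, ?_⟩
    · intro a b he
      by_contra hab
      have : ∀ a b : Fin 6, ∃ s : Finset (Fin 6), s.card = 4 ∧ ¬ ({0, 1, 2} ⊆ s) ∧
        ¬ ({3, 4, 5} ⊆ s) ∧ a ∈ s ∧ b ∈ s := by decide
      obtain ⟨s, hs, h4, h5, ha, hb⟩ := this a b
      exact mk_ne_of_indepOn w h a b hab s ha hb (h1 s hs h4 h5) he
    · intro a b c hab hac hbc
      rw [collinear3_iff w h a b c hab hac hbc]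
      have hc : ({a, b, c} : Finset (Fin 6)).card = 3 :=
        Finset.card_eq_three.2 ⟨a, b, c, hab, hac, hbc, rfl⟩
      generalize ({a, b, c} : Finset (Fin 6)) = t at hc
      constructor
      · intro hn
        by_contra hcon
        have : ∀ t : Finset (Fin 6), t.card = 3 → ¬ (t ⊆ {0, 1, 2} ∨ t ⊆ {3, 4, 5}) →
          ∃ s : Finset (Fin 6), t ⊆ s ∧ s.card = 4 ∧ ¬ ({0, 1, 2} ⊆ s) ∧
            ¬ ({3, 4, 5} ⊆ s) := by decide
        obtain ⟨s, hts, hs, h4, h5⟩ := this t hc hcon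
        exact hn ((h1 s hs h4 h5).mono (by exact_mod_cast hts))
      · rintro (ht | ht)
        · rwa [Finset.eq_of_subset_of_card_le ht (by rw [hc]; decide)]
        · rwa [Finset.eq_of_subset_of_card_le ht (by rw [hc]; decide)]
    · intro a b c d hab hac had hbc hbd hcd
      rw [coplanar4_iff w h a b c d hab hac had hbc hbd hcd]
      have hs : ({a, b, c, d} : Finset (Fin 6)).card = 4 := by simp [*]
      rw [key _ hs]
      generalize ({a, b, c, d} : Finset (Fin 6)) = s at hs
      constructor
      · intro hn
        by_contra hcon
        push Not at hcon
        exact hn (h1 s hs hcon.1 hcon.2)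
      · rintro (ht | ht) hn
        · exact h2 (hn.mono (by exact_mod_cast ht))
        · exact h3 (hn.mono (by exact_mod_cast ht))

lemma card_projective [Fintype F] (P : (Fin 6 → ℙ F (Fin 4 → F)) → Prop)
    (Q : (Fin 6 → (Fin 4 → F)) → Prop)
    (hQ0 : ∀ w, Q w → ∀ i, w i ≠ 0)
    (hPQ : ∀ (w : Fin 6 → (Fin 4 → F)) (h : ∀ i, w i ≠ 0),
      P (fun i => Projectivization.mk F (w i) (h i)) ↔ Q w) :
    Nat.card {w // Q w} = Nat.card {σ // P σ} * (Fintype.card F - 1) ^ 6 := by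
  classical
  have e : {w // Q w} ≃ {σ // P σ} × (Fin 6 → Fˣ) := by
    refine Equiv.trans (Equiv.ofBijective (β := {p : (Fin 6 → ℙ F (Fin 4 → F)) × (Fin 6 → Fˣ) //
      P p.1 }) (fun w => ⟨Equiv.arrowProdEquivProdArrow _ _ _ (fun i =>
        Projectivization.nonZeroEquivProjectivizationProdUnits F (Fin 4 → F)
          ⟨w.1 i, hQ0 w.1 w.2 i⟩), ?_⟩) ⟨?_, ?_⟩) ?_
    · exact (hPQ w.1 (hQ0 w.1 w.2)).2 w.2
    · intro w w' he
      have := (Equiv.arrowProdEquivProdArrow _ _ _).injective (Subtype.ext_iff.1 he)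
      ext1; funext i
      have h2 := (Projectivization.nonZeroEquivProjectivizationProdUnits F
        (Fin 4 → F)).injective (congrFun this i)
      exact congrArg Subtype.val h2
    · rintro ⟨p, hp⟩
      obtain ⟨f, rfl⟩ := (Equiv.arrowProdEquivProdArrow _ _ _).surjective p
      let g := fun i => (Projectivization.nonZeroEquivProjectivizationProdUnits F
        (Fin 4 → F)).symm (f i)
      have hf : f = fun i => (Projectivization.nonZeroEquivProjectivizationProdUnits F
        (Fin 4 → F)) (g i) := by funext i; simp [g]
      clear_value g
      subst hf
      refine ⟨⟨fun i => (g i).1, (hPQ _ (fun i => (g i).2)).1 hp⟩, rfl⟩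
    · exact 
      { toFun := fun p => (⟨p.1.1, p.2⟩, p.1.2)
        invFun := fun p => ⟨(p.1.1, p.2), p.1.2⟩
        left_inv := fun _ => rfl
        right_inv := fun _ => rfl }
  rw [Nat.card_congr e, Nat.card_prod, Nat.card_fun, Nat.card_units]
  simp

/-- The four standard basis vectors followed by two more vectors. -/
def base (a c : Fin 4 → F) : Fin 6 → (Fin 4 → F) :=
  ![Pi.single 0 1, Pi.single 1 1, Pi.single 2 1, Pi.single 3 1, a, c]

lemma card_gl [Fintype F] (p : Equiv.Perm (Fin 6)) (Q : (Fin 6 → (Fin 4 → F)) → Prop)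
    (hQg : ∀ (g : GL (Fin 4) F) w, Q (fun i => g.1.mulVec (w i)) ↔ Q w)
    (hQ : ∀ w, Q (w ∘ p) → LinearIndependent F ![w 0, w 1, w 2, w 3]) :
    Nat.card {w // Q w} = Nat.card (GL (Fin 4) F) *
      Nat.card {x : (Fin 4 → F) × (Fin 4 → F) // Q (base x.1 x.2 ∘ p)} := by
  classical
  rw [← Nat.card_prod]
  symm
  refine Nat.card_congr (Equiv.ofBijective (fun y => ⟨fun i => y.1.1.mulVec
    (base y.2.1.1 y.2.1.2 (p i)), (hQg y.1 _).2 y.2.2⟩) ⟨?_, ?_⟩)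
  · rintro ⟨g, ⟨⟨a, c⟩, h⟩⟩ ⟨g', ⟨⟨a', c'⟩, h'⟩⟩ he
    have h1 : ∀ i, g.1.mulVec (base a c i) = g'.1.mulVec (base a' c' i) := by
      intro i
      have := congrFun (Subtype.ext_iff.1 he) (p.symm i)
      simpa using this
    have hg : g = g' := by
      ext i j
      have h0 := congrFun (h1 0) i
      have h2 := congrFun (h1 1) i
      have h3 := congrFun (h1 2) i
      have h4 := congrFun (h1 3) i
      simp [base] at h0 h2 h3 h4
      fin_cases j <;> assumption
    subst hg
    have hinj := Matrix.mulVec_injective_of_isUnit g.isUnit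
    have ha := hinj (h1 4)
    have hc := hinj (h1 5)
    simp only [base] at ha hc
    have ha : a = a' := ha
    have hc : c = c' := hc
    subst ha hc
    rfl
  · rintro ⟨w, hw⟩
    have hli := hQ (w ∘ p.symm) (by simpa [Function.comp_def] using hw)
    set v := w ∘ p.symm with hv
    have hwv : w = v ∘ p := by simp [hv, Function.comp_def]
    have hu : IsUnit (Matrix.of ![v 0, v 1, v 2, v 3])ᵀ :=
      (Matrix.isUnit_transpose _).2 (Matrix.linearIndependent_rows_iff_isUnit.1 hli)
    obtain ⟨g, hg⟩ := hu
    have hsurj := Matrix.mulVec_surjective_iff_isUnit.2 g.isUnit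
    obtain ⟨a, ha⟩ := hsurj (v 4)
    obtain ⟨c, hc⟩ := hsurj (v 5)
    have hb : ∀ i, g.1.mulVec (base a c i) = v i := by
      intro i
      fin_cases i
      · simp [base, hg]
      · simp [base, hg]
      · simp [base, hg]
      · simp [base, hg]
      · exact ha
      · exact hc
    refine ⟨⟨g, ⟨(a, c), ?_⟩⟩, ?_⟩
    · rw [← hQg g]
      simp only [Function.comp_apply, hb]
      rwa [hwv] at hw
    · ext1
      simp only [hb]
      exact hwv.symm

end helpers

section helpers2

open scoped Matrix

variable {F : Type} [Field F]

lemma indepOn_gl (g : GL (Fin 4) F) (w : Fin 6 → (Fin 4 → F)) (s : Set (Fin 6)) :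
    LinearIndepOn F (fun i => g.1.mulVec (w i)) s ↔ LinearIndepOn F w s := by
  have hinj := Matrix.mulVec_injective_of_isUnit g.isUnit
  exact LinearMap.linearIndependent_iff_of_injOn (g.1.mulVecLin)
    (v := fun x : s => w x) hinj.injOn

lemma nonzero_of_indepOn (w : Fin 6 → (Fin 4 → F)) (i : Fin 6) (s : Finset (Fin 6)) (hi : i ∈ s)
    (h : LinearIndepOn F w (s : Set (Fin 6))) : w i ≠ 0 :=
  h.ne_zero (by exact_mod_cast hi)

lemma li_of_indepOn (w : Fin 6 → (Fin 4 → F)) (a b c d : Fin 6)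
    (hab : a ≠ b ∧ a ≠ c ∧ a ≠ d ∧ b ≠ c ∧ b ≠ d ∧ c ≠ d)
    (h : LinearIndepOn F w (({a, b, c, d} : Finset (Fin 6)) : Set (Fin 6))) :
    LinearIndependent F ![w a, w b, w c, w d] := by
  rw [indepOn_det w a b c d hab, ← isUnit_iff_ne_zero, ← Matrix.isUnit_iff_isUnit_det,
    ← Matrix.linearIndependent_rows_iff_isUnit] at h
  exact h

/-- The permutation of indices used for the hyperfiguration. -/
def hypPerm : Equiv.Perm (Fin 6) where
  toFun := ![0, 1, 4, 2, 3, 5]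
  invFun := ![0, 1, 3, 4, 2, 5]
  left_inv := by decide
  right_inv := by decide

lemma det4 (u v w x : Fin 4 → F) : (Matrix.of ![u, v, w, x]).det =
      u 0 * v 1 * w 2 * x 3 - u 0 * v 1 * w 3 * x 2 - u 0 * v 2 * w 1 * x 3 + u 0 * v 2 * w 3 * x 1
      + u 0 * v 3 * w 1 * x 2 - u 0 * v 3 * w 2 * x 1 - u 1 * v 0 * w 2 * x 3 + u 1 * v 0 * w 3 * x 2
      + u 1 * v 2 * w 0 * x 3 - u 1 * v 2 * w 3 * x 0 - u 1 * v 3 * w 0 * x 2 + u 1 * v 3 * w 2 * x 0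
      + u 2 * v 0 * w 1 * x 3 - u 2 * v 0 * w 3 * x 1 - u 2 * v 1 * w 0 * x 3 + u 2 * v 1 * w 3 * x 0
      + u 2 * v 3 * w 0 * x 1 - u 2 * v 3 * w 1 * x 0 - u 3 * v 0 * w 1 * x 2 + u 3 * v 0 * w 2 * x 1
      + u 3 * v 1 * w 0 * x 2 - u 3 * v 1 * w 2 * x 0 - u 3 * v 2 * w 0 * x 1 + u 3 * v 2 * w 1 * x 0 := by
  simp [Matrix.det_succ_row_zero, Fin.sum_univ_succ, Fin.succAbove]
  ring

lemma quad_cases : ∀ s : Finset (Fin 6), s.card = 4 →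
        s = {0, 1, 2, 3} ∨
        s = {0, 1, 2, 4} ∨
        s = {0, 1, 2, 5} ∨
        s = {0, 1, 3, 4} ∨
        s = {0, 1, 3, 5} ∨
        s = {0, 1, 4, 5} ∨
        s = {0, 2, 3, 4} ∨
        s = {0, 2, 3, 5} ∨
        s = {0, 2, 4, 5} ∨
        s = {0, 3, 4, 5} ∨
        s = {1, 2, 3, 4} ∨
        s = {1, 2, 3, 5} ∨
        s = {1, 2, 4, 5} ∨
        s = {1, 3, 4, 5} ∨
        s = {2, 3, 4, 5} := by
  decide

set_option maxHeartbeats 2000000 in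
lemma arcV_base (a c : Fin 4 → F) : ArcV (base a c) ↔
    (∀ i, a i ≠ 0) ∧ (∀ i, c i ≠ 0) ∧ ∀ i j, i ≠ j → a i * c j ≠ a j * c i := by
  constructor
  · intro h
    have D : ∀ x y z t : Fin 6, (x ≠ y ∧ x ≠ z ∧ x ≠ t ∧ y ≠ z ∧ y ≠ t ∧ z ≠ t) →
        (Matrix.of ![base a c x, base a c y, base a c z, base a c t]).det ≠ 0 := by
      intro x y z t hd
      rw [← indepOn_det _ _ _ _ _ hd]
      exact h _ (by simp [hd])
    refine ⟨?_, ?_, ?_⟩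
    · intro i
      have h0 := D 4 1 2 3 (by decide)
      have h1 := D 0 4 2 3 (by decide)
      have h2 := D 0 1 4 3 (by decide)
      have h3 := D 0 1 2 4 (by decide)
      simp [det4, base] at h0 h1 h2 h3
      fin_cases i <;> assumption
    · intro i
      have h0 := D 5 1 2 3 (by decide)
      have h1 := D 0 5 2 3 (by decide)
      have h2 := D 0 1 5 3 (by decide)
      have h3 := D 0 1 2 5 (by decide)
      simp [det4, base] at h0 h1 h2 h3
      fin_cases i <;> assumption
    · have h01 := D 4 5 2 3 (by decide)
      have h02 := D 4 1 5 3 (by decide)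
      have h03 := D 4 1 2 5 (by decide)
      have h12 := D 0 4 5 3 (by decide)
      have h13 := D 0 4 2 5 (by decide)
      have h23 := D 0 1 4 5 (by decide)
      simp [det4, base, sub_eq_zero] at h01 h02 h03 h12 h13 h23
      intro i j hij
      fin_cases i <;> fin_cases j <;> first | exact absurd rfl hij | assumption | (apply Ne.symm; assumption)
  · rintro ⟨ha, hc, hac⟩ s hs
    have h01 := sub_ne_zero.2 (hac 0 1 (by decide))
    have h02 := sub_ne_zero.2 (hac 0 2 (by decide))
    have h03 := sub_ne_zero.2 (hac 0 3 (by decide))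
    have h12 := sub_ne_zero.2 (hac 1 2 (by decide))
    have h13 := sub_ne_zero.2 (hac 1 3 (by decide))
    have h23 := sub_ne_zero.2 (hac 2 3 (by decide))
    have neg : ∀ x y : F, x - y ≠ 0 → -x + y ≠ 0 := by
      intro x y h h'
      apply h
      linear_combination -h'
    obtain rfl | rfl | rfl | rfl | rfl | rfl | rfl | rfl | rfl | rfl | rfl | rfl | rfl | rfl | rfl :=
      quad_cases s hs <;>
    · rw [indepOn_det _ _ _ _ _ (by decide)]
      simp [det4, base, ha, hc]
      try first | assumption | (apply neg; assumption)

set_option maxHeartbeats 2000000 in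
lemma hypV_base (a c : Fin 4 → F) : HypV (base a c ∘ hypPerm) ↔
    (a 0 ≠ 0 ∧ a 1 ≠ 0 ∧ a 2 = 0 ∧ a 3 = 0) ∧ (c 0 = 0 ∧ c 1 = 0 ∧ c 2 ≠ 0 ∧ c 3 ≠ 0) := by
  have hb : base a c ∘ hypPerm = ![Pi.single 0 1, Pi.single 1 1, a, Pi.single 2 1,
      Pi.single 3 1, c] := by
    funext i; fin_cases i <;> rfl
  rw [hb]
  constructor
  · rintro ⟨h1, h2, h3⟩
    have hA : ∀ j : Fin 6, j = 3 ∨ j = 4 → ¬ LinearIndepOn F (![Pi.single 0 1, Pi.single 1 1, a,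
        Pi.single 2 1, Pi.single 3 1, c] : Fin 6 → Fin 4 → F)
        (({0, 1, 2, j} : Finset (Fin 6)) : Set (Fin 6)) := by
      intro j _ h
      exact h2 (h.mono (by intro x; simp; tauto))
    have hC : ∀ j : Fin 6, j = 0 ∨ j = 1 → ¬ LinearIndepOn F (![Pi.single 0 1, Pi.single 1 1, a,
        Pi.single 2 1, Pi.single 3 1, c] : Fin 6 → Fin 4 → F)
        (({j, 3, 4, 5} : Finset (Fin 6)) : Set (Fin 6)) := by
      intro j _ h
      exact h3 (h.mono (by intro x; simp; tauto))
    have a2 := hA 4 (by simp)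
    have a3 := hA 3 (by simp)
    have c0 := hC 1 (by simp)
    have c1 := hC 0 (by simp)
    have a0 := h1 {1, 2, 3, 4} (by decide) (by decide) (by decide)
    have a1 := h1 {0, 2, 3, 4} (by decide) (by decide) (by decide)
    have c2 := h1 {0, 1, 4, 5} (by decide) (by decide) (by decide)
    have c3 := h1 {0, 1, 3, 5} (by decide) (by decide) (by decide)
    rw [indepOn_det _ _ _ _ _ (by decide)] at a0 a1 a2 a3 c0 c1 c2 c3
    simp [det4] at a0 a1 a2 a3 c0 c1 c2 c3
    exact ⟨⟨a0, a1, a2, a3⟩, c0, c1, c2, c3⟩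
  · rintro ⟨⟨a0, a1, a2, a3⟩, c0, c1, c2, c3⟩
    refine ⟨?_, ?_, ?_⟩
    · intro s hs h012 h345
      have : ∀ s : Finset (Fin 6), s.card = 4 → ¬ ({0, 1, 2} ⊆ s) → ¬ ({3, 4, 5} ⊆ s) →
        s = {0, 1, 3, 4} ∨ s = {0, 2, 3, 4} ∨ s = {1, 2, 3, 4} ∨
        s = {0, 1, 3, 5} ∨ s = {0, 2, 3, 5} ∨ s = {1, 2, 3, 5} ∨
        s = {0, 1, 4, 5} ∨ s = {0, 2, 4, 5} ∨ s = {1, 2, 4, 5} := by decide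
      obtain rfl | rfl | rfl | rfl | rfl | rfl | rfl | rfl | rfl := this s hs h012 h345 <;>
      · rw [indepOn_det _ _ _ _ _ (by decide)]
        simp [det4, *]
    · intro h
      rw [linearIndepOn_finset_iff] at h
      have := h ![a 0, a 1, -1, 0, 0, 0] (by
        funext i; fin_cases i <;> simp [*]) 2 (by simp)
      simp at this
    · intro h
      rw [linearIndepOn_finset_iff] at h
      have := h ![0, 0, 0, c 2, c 3, -1] (by
        funext i; fin_cases i <;> simp [*]) 5 (by simp)
      simp at this

variable [Fintype F]

lemma card_arc_params :
    Nat.card {x : (Fin 4 → F) × (Fin 4 → F) // ArcV (base x.1 x.2 ∘ (1 : Equiv.Perm (Fin 6)))} =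
      (Fintype.card F - 1) ^ 4 * (Fintype.card F - 1).descFactorial 4 := by
  classical
  have e : (Fin 4 → Fˣ) × (Fin 4 ↪ Fˣ) ≃
      {x : (Fin 4 → F) × (Fin 4 → F) // ArcV (base x.1 x.2 ∘ (1 : Equiv.Perm (Fin 6)))} := by
    refine Equiv.ofBijective (fun y => ⟨(fun i => y.1 i, fun i => y.1 i * y.2 i), ?_⟩) ⟨?_, ?_⟩
    · refine (arcV_base _ _).2 ⟨by simp, by simp, ?_⟩
      intro i j hij h
      apply hij
      apply y.2.injective
      ext
      have h1 : ((y.1 i * y.1 j : Fˣ) : F) ≠ 0 := Units.ne_zero _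
      apply mul_left_cancel₀ h1
      push_cast
      linear_combination -h
    · rintro ⟨a, t⟩ ⟨a', t'⟩ h
      replace h := Prod.ext_iff.1 (Subtype.ext_iff.1 h)
      have ha : a = a' := by
        funext i; ext; exact congrFun h.1 i
      subst ha
      have ht : t = t' := by
        ext i
        have := congrFun h.2 i
        simpa using this
      rw [ht]
    · rintro ⟨⟨a, c⟩, h⟩
      obtain ⟨h1, h2, h3⟩ := (arcV_base a c).1 h
      refine ⟨⟨fun i => Units.mk0 (a i) (h1 i),
        ⟨fun i => Units.mk0 (c i / a i) (div_ne_zero (h2 i) (h1 i)), ?_⟩⟩, ?_⟩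
      · intro i j hij
        by_contra hne
        apply h3 i j hne
        have := congrArg Units.val hij
        simp only [Units.val_mk0] at this
        rw [div_eq_div_iff (h1 i) (h1 j)] at this
        linear_combination -this
      · ext i
        · rfl
        · exact mul_div_cancel₀ (c i) (h1 i)
  rw [← Nat.card_congr e, Nat.card_prod, Nat.card_fun, Nat.card_units, Nat.card_eq_fintype_card,
    Nat.card_eq_fintype_card, Nat.card_eq_fintype_card, Fintype.card_embedding_eq,
    Fintype.card_units]
  simp

lemma card_hyp_params :
    Nat.card {x : (Fin 4 → F) × (Fin 4 → F) // HypV (base x.1 x.2 ∘ hypPerm)} =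
      (Fintype.card F - 1) ^ 4 := by
  classical
  have e : (Fin 4 → Fˣ) ≃
      {x : (Fin 4 → F) × (Fin 4 → F) // HypV (base x.1 x.2 ∘ hypPerm)} := by
    refine Equiv.ofBijective (fun y => ⟨(![y 0, y 1, 0, 0], ![0, 0, y 2, y 3]), ?_⟩) ⟨?_, ?_⟩
    · exact (hypV_base _ _).2 (by simp)
    · intro y y' h
      simp only [Subtype.mk.injEq, Prod.mk.injEq] at h
      have h0 := congrFun h.1 0
      have h1 := congrFun h.1 1
      have h2 := congrFun h.2 2
      have h3 := congrFun h.2 3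
      simp at h0 h1 h2 h3
      funext i; fin_cases i <;> (ext; assumption)
    · rintro ⟨⟨a, c⟩, h⟩
      obtain ⟨⟨a0, a1, a2, a3⟩, c0, c1, c2, c3⟩ := (hypV_base a c).1 h
      refine ⟨![Units.mk0 _ a0, Units.mk0 _ a1, Units.mk0 _ c2, Units.mk0 _ c3], ?_⟩
      ext i
      · fin_cases i <;> simp [*]
      · fin_cases i <;> simp [*]
  rw [← Nat.card_congr e, Nat.card_fun, Nat.card_units]
  simp

lemma card_arcV : Nat.card {w : Fin 6 → (Fin 4 → F) // ArcV w} = Nat.card (GL (Fin 4) F) *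
    ((Fintype.card F - 1) ^ 4 * (Fintype.card F - 1).descFactorial 4) := by
  rw [← card_arc_params]
  apply card_gl
  · intro g w
    simp only [ArcV, indepOn_gl]
  · intro w hw
    exact li_of_indepOn w 0 1 2 3 (by decide) (hw _ (by decide))

lemma card_hypV : Nat.card {w : Fin 6 → (Fin 4 → F) // HypV w} = Nat.card (GL (Fin 4) F) *
    (Fintype.card F - 1) ^ 4 := by
  rw [← card_hyp_params]
  apply card_gl
  · intro g w
    simp only [HypV, indepOn_gl]
  · intro w hw
    exact li_of_indepOn (w ∘ hypPerm) 0 1 3 4 (by decide)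
      (hw.1 _ (by decide) (by decide) (by decide))

end helpers2

/-- `C_{6,4}(q) = q^18 - 9q^17 + 25q^16 - 16q^15 - 58q^14 - 32q^13 - 10q^12 + 82q^11
+ 73q^10 + 41q^9 - 15q^8 - 66q^7 - 16q^6 + 40·A_6(4,q)`. -/
theorem C64_via_A6 (F : Type) [Field F] [Fintype F] (q : ℕ) (hq : q = Fintype.card F) :
    (Nat.card {σ : Fin 6 → ℙ F (Fin 4 → F) // IsArc4 F σ} : ℤ) =
      (q : ℤ)^18 - 9*(q : ℤ)^17 + 25*(q : ℤ)^16 - 16*(q : ℤ)^15 - 58*(q : ℤ)^14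
        - 32*(q : ℤ)^13 - 10*(q : ℤ)^12 + 82*(q : ℤ)^11 + 73*(q : ℤ)^10 + 41*(q : ℤ)^9
        - 15*(q : ℤ)^8 - 66*(q : ℤ)^7 - 16*(q : ℤ)^6
        + 40 * (Nat.card {σ : Fin 6 → ℙ F (Fin 4 → F) // IsHyp6Real F σ} : ℤ) := by
  classical
  subst hq
  have hA := card_projective (F := F) (IsArc4 F) ArcV (by
    intro w hw i
    have : ∀ i : Fin 6, ∃ s : Finset (Fin 6), s.card = 4 ∧ i ∈ s := by decide
    obtain ⟨s, hs, hi⟩ := this i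
    exact nonzero_of_indepOn w i s hi (hw s hs)) isArc4_iff
  have hH := card_projective (F := F) (IsHyp6Real F) HypV (by
    intro w hw i
    have : ∀ i : Fin 6, ∃ s : Finset (Fin 6), s.card = 4 ∧ ¬ ({0, 1, 2} ⊆ s) ∧
      ¬ ({3, 4, 5} ⊆ s) ∧ i ∈ s := by decide
    obtain ⟨s, hs, h4, h5, hi⟩ := this i
    exact nonzero_of_indepOn w i s hi (hw.1 s hs h4 h5)) isHyp_iff
  rw [card_arcV, Matrix.card_GL_field] at hA
  rw [card_hypV, Matrix.card_GL_field] at hH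
  generalize Nat.card {σ : Fin 6 → ℙ F (Fin 4 → F) // IsArc4 F σ} = C at *
  generalize Nat.card {σ : Fin 6 → ℙ F (Fin 4 → F) // IsHyp6Real F σ} = A at *
  have hq1 : 1 < Fintype.card F := Fintype.one_lt_card
  generalize Fintype.card F = q at *
  have hdf : ((q - 1).descFactorial 4 : ℤ) = ((q : ℤ) - 1) * (q - 2) * (q - 3) * (q - 4) := by
    obtain ⟨n, rfl⟩ : ∃ n, q = n + 1 := ⟨q - 1, by lia⟩
    simp only [Nat.add_sub_cancel]
    rcases n with _ | _ | _ | _ | n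
    · simp
    · simp
    · simp
    · simp
    · simp [Nat.descFactorial]
      ring
  have hq0 : ((q : ℤ) - 1) ≠ 0 := by
    have : (1 : ℤ) < q := by exact_mod_cast hq1
    lia
  have hsub : ∀ i : ℕ, i ≤ 4 → ((q ^ 4 - q ^ i : ℕ) : ℤ) = (q : ℤ) ^ 4 - (q : ℤ) ^ i := by
    intro i hi
    rw [Nat.cast_sub (Nat.pow_le_pow_right (by lia) hi)]
    push_cast; rfl
  have h1 : ((q - 1 : ℕ) : ℤ) = (q : ℤ) - 1 := by
    rw [Nat.cast_sub hq1.le]; rfl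
  have hA' := congrArg (Nat.cast : ℕ → ℤ) hA
  have hH' := congrArg (Nat.cast : ℕ → ℤ) hH
  simp only [Fin.prod_univ_four, Nat.cast_mul, Nat.cast_pow, h1, hdf] at hA' hH'
  rw [hsub _ (by decide), hsub _ (by decide), hsub _ (by decide), hsub _ (by decide)] at hA' hH'
  simp at hA' hH'
  apply mul_left_cancel₀ (pow_ne_zero 6 hq0)
  linear_combination -hA' + 40 * hH'
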